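/- There are exactly 6 conjugacy classes of torsion-free subgroups of PSL(2,ℤ) of index 12 and genus zero. -/

import Mathlib

open Matrix

/-- `SL(2,ℤ)`: the group of 2×2 integer matrices of determinant 1. -/
abbrev SL2Z := Matrix.SpecialLinearGroup (Fin 2) ℤ

instance : Fact (Even (Fintype.card (Fin 2))) := ⟨by simp⟩

/-- The subgroup `{±I}` of `SL(2,ℤ)`. -/
def pmOne : Subgroup SL2Z := Subgroup.zpowers (-1 : SL2Z)

instance : pmOne.Normal := by
  constructor
  intro x hx g
  obtain ⟨n, rfl⟩ := hx
  have h : Commute ((-1 : SL2Z) ^ n) g := (Commute.neg_one_left g).zpow_left n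
  refine ⟨n, ?_⟩
  rw [← h.eq, mul_assoc, mul_inv_cancel, mul_one]

/-- `PSL(2,ℤ)`, the modular group, as the quotient of `SL(2,ℤ)` by `{±I}`. -/
abbrev PSL2Z := SL2Z ⧸ pmOne

/-- The natural projection `ξ : SL(2,ℤ) → PSL(2,ℤ)`. -/
def xi : SL2Z →* PSL2Z := QuotientGroup.mk' pmOne

/-- The element `S` of `PSL(2,ℤ)`, the image of `[[0,-1],[1,0]]`. -/
def Sp : PSL2Z := xi ⟨!![0, -1; 1, 0], by norm_num [Matrix.det_fin_two_of]⟩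

/-- The element `T` of `PSL(2,ℤ)`, the image of `[[1,1],[0,1]]`. -/
def Tp : PSL2Z := xi ⟨!![1, 1; 0, 1], by norm_num [Matrix.det_fin_two_of]⟩

/-- The number of left cosets in `PSL(2,ℤ)/Γ` fixed by `g` (for the
left-multiplication action).  For `g = S` this is `e₂(Γ)`, for `g = S*T` it is `e₃(Γ)`. -/
noncomputable def nFix (g : PSL2Z) (Γ : Subgroup PSL2Z) : ℕ :=
  Nat.card {x : PSL2Z ⧸ Γ // g • x = x}

/-- The number of orbits of the cyclic subgroup generated by `g` on `PSL(2,ℤ)/Γ`.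
For `g = S, S*T, T` these are `c₂(Γ), c₃(Γ), h(Γ)` respectively. -/
noncomputable def nOrb (g : PSL2Z) (Γ : Subgroup PSL2Z) : ℕ :=
  Nat.card (MulAction.orbitRel.Quotient (Subgroup.zpowers g) (PSL2Z ⧸ Γ))

/-- `Γ` has genus zero: `c₂(Γ) + c₃(Γ) + h(Γ) = index(Γ) + 2`. -/
def GenusZero (Γ : Subgroup PSL2Z) : Prop :=
  nOrb Sp Γ + nOrb (Sp * Tp) Γ + nOrb Tp Γ = Γ.index + 2

/-- `Γ` is torsion free: it contains no nontrivial element of finite order. -/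
def TorsionFree (Γ : Subgroup PSL2Z) : Prop :=
  ∀ x ∈ Γ, x ≠ 1 → ¬ IsOfFinOrder x

/-- Two subgroups of a group are conjugate. -/
def SubgroupConj {G : Type*} [Group G] (H K : Subgroup G) : Prop :=
  ∃ g : G, Subgroup.map (MulAut.conj g).toMonoidHom H = K

/-- The number of conjugacy classes of subgroups of `PSL(2,ℤ)` satisfying `P`. -/
noncomputable def countClasses (P : Subgroup PSL2Z → Prop) : ℕ :=
  Nat.card (Quot fun A B : {Γ : Subgroup PSL2Z // P Γ} => SubgroupConj A.1 B.1)

/-- The index of the torsion free subgroup `Γ^tf` associated to `Γ`: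
`index(Γ) + 3·e₂(Γ) + 2·e₃(Γ)`. -/
noncomputable def tfIdx (Γ : Subgroup PSL2Z) : ℕ :=
  Γ.index + 3 * nFix Sp Γ + 2 * nFix (Sp * Tp) Γ

/-! ### The finite computation -/

/-- The standard permutation with cycles `(3i, 3i+1, 3i+2)`. -/
def rotN (y c : ℕ) : ℕ := 3 * (y / 3) + (y + c) % 3

/-- Entry `k` of a base-16 encoded table. -/
def tget (p k : ℕ) : ℕ := p / 16 ^ k % 16

/-- Encoded tables of the involutions of the six models. -/
def modS : ℕ → ℕ
  | 0 => 79346592844131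
  | 1 => 132262210897491
  | 2 => 188605457041251
  | 3 => 132124758051171
  | 4 => 188508551841891
  | _ => 188186160859491

/-- Parents of the points 6 and 9 in the spanning trees. -/
def modPar : ℕ → ℕ × ℕ
  | 0 => (1, 2)
  | 1 => (2, 4)
  | 2 => (1, 8)
  | 3 => (1, 2)
  | 4 => (1, 7)
  | _ => (1, 2)

/-- select base point of the block -/
def blk (y0 y1 y2 y3 j : ℕ) : ℕ :=
  rotN (bif Nat.blt j 3 then y0 else bif Nat.blt j 6 then y1 else bif Nat.blt j 9 then y2 else y3)
    (j % 3)

/-- test all `j < n` -/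
def allB (f : ℕ → Bool) : ℕ → Bool
  | 0 => true
  | n + 1 => f n && allB f n

/-- test some `j < n` -/
def anyB (f : ℕ → Bool) : ℕ → Bool
  | 0 => false
  | n + 1 => f n || anyB f n

/-- count `j < n` -/
def cntB (f : ℕ → Bool) : ℕ → ℕ
  | 0 => 0
  | n + 1 => bif f n then Nat.succ (cntB f n) else cntB f n

/-- the first `n` iterates starting from `x` are all at least `j` -/
def minB (t : ℕ → ℕ) (j : ℕ) : ℕ → ℕ → Bool
  | 0, _ => true
  | n + 1, x => Nat.ble j x && minB t j n (t x)

def isoMap (s : ℕ → ℕ) (i r : ℕ) : ℕ → ℕ :=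
  let y1 := s r
  let y2 := s (blk r y1 0 0 (modPar i).1)
  let y3 := s (blk r y1 y2 0 (modPar i).2)
  blk r y1 y2 y3

def isoB (s : ℕ → ℕ) (f : ℕ → ℕ) (m : ℕ) : Bool :=
  allB (fun j => Nat.beq (s (f j)) (f (tget m j))) 12

def leafOK (s : ℕ → ℕ) : Bool :=
  allB (fun j => Nat.blt (s j) 6) 6 ||
  (!(Nat.beq (cntB (fun j => minB s j 2 j) 12 + cntB (fun j => minB (rotN · 1) j 3 j) 12
    + cntB (fun j => minB (fun k => s (rotN k 1)) j 12 j) 12) 14)) ||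
  anyB (fun i => anyB (fun r => isoB s (isoMap s i r) (modS i)) 12) 6

/-- exhaustive search over fixed point free involutions -/
def search : ℕ → List ℕ → ℕ → Bool
  | 0, _, _ => false
  | _ + 1, [], p => leafOK (tget p)
  | n + 1, k :: rest, p =>
      rest.all fun j => search n (rest.erase j) (p + (j * 16 ^ k + k * 16 ^ j))

set_option maxRecDepth 100000 in
theorem search_true : search 7 [1, 2, 4, 5, 6, 7, 8, 9, 10, 11] 3 = true := by decide +kernel

theorem allB_iff (f : ℕ → Bool) (n : ℕ) : allB f n = true ↔ ∀ j < n, f j = true := by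
  induction n with
  | zero => simp [allB]
  | succ n ih =>
    simp only [allB, Bool.and_eq_true, ih, Nat.lt_succ_iff_lt_or_eq]
    constructor
    · rintro ⟨h, h'⟩ j (hj | rfl)
      · exact h' j hj
      · exact h
    · intro h
      exact ⟨h n (Or.inr rfl), fun j hj => h j (Or.inl hj)⟩

theorem anyB_iff (f : ℕ → Bool) (n : ℕ) : anyB f n = true ↔ ∃ j < n, f j = true := by
  induction n with
  | zero => simp [anyB]
  | succ n ih =>
    simp only [anyB, Bool.or_eq_true, ih, Nat.lt_succ_iff_lt_or_eq]
    constructor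
    · rintro (h | ⟨j, hj, h⟩)
      · exact ⟨n, Or.inr rfl, h⟩
      · exact ⟨j, Or.inl hj, h⟩
    · rintro ⟨j, hj | rfl, h⟩
      · exact Or.inr ⟨j, hj, h⟩
      · exact Or.inl h

theorem cntB_eq (f : ℕ → Bool) (n : ℕ) :
    cntB f n = ((Finset.range n).filter fun j => f j = true).card := by
  induction n with
  | zero => simp [cntB]
  | succ n ih =>
    rw [Finset.range_add_one, Finset.filter_insert]
    cases h : f n <;> simp [cntB, h, ih]

theorem minB_iff (t : ℕ → ℕ) (j n x : ℕ) :
    minB t j n x = true ↔ ∀ k < n, j ≤ t^[k] x := by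
  induction n generalizing x with
  | zero => simp [minB]
  | succ n ih =>
    simp only [minB, Bool.and_eq_true, ih, Nat.ble_eq]
    constructor
    · rintro ⟨h, h'⟩ k hk
      cases k with
      | zero => exact h
      | succ k => exact h' k (by omega)
    · intro h
      exact ⟨h 0 (by omega), fun k hk => h (k + 1) (by omega)⟩

/-- The number of points that are minimal among their first `m` iterates. -/
def mincard (σ : Fin 12 → Fin 12) (m : ℕ) : ℕ :=
  (Finset.univ.filter fun j : Fin 12 => ∀ n < m, j ≤ σ^[n] j).card

theorem cnt_mincard (t : ℕ → ℕ) (σ : Fin 12 → Fin 12) (h : ∀ j : Fin 12, t j = σ j) (m : ℕ) :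
    cntB (fun j => minB t j m j) 12 = mincard σ m := by
  have hit : ∀ n (j : Fin 12), t^[n] j = (σ^[n] j : Fin 12) := by
    intro n
    induction n with
    | zero => intro j; rfl
    | succ n ih => intro j; rw [Function.iterate_succ_apply, Function.iterate_succ_apply, h, ih]
  rw [cntB_eq, mincard]
  symm
  apply Finset.card_bij (fun (j : Fin 12) _ => (j : ℕ))
  · intro j hj
    simp only [Finset.mem_filter, Finset.mem_univ, true_and] at hj
    simp only [Finset.mem_filter, Finset.mem_range, minB_iff]
    refine ⟨j.2, fun k hk => ?_⟩
    rw [hit]; exact hj k hk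
  · intro a _ b _ hab
    exact Fin.ext hab
  · intro b hb
    simp only [Finset.mem_filter, Finset.mem_range, minB_iff] at hb
    refine ⟨⟨b, hb.1⟩, ?_, rfl⟩
    simp only [Finset.mem_filter, Finset.mem_univ, true_and]
    intro k hk
    have := hb.2 k hk
    have h2 := hit k ⟨b, hb.1⟩
    simp only at h2
    rw [h2] at this
    exact this

theorem search_sound (s : ℕ → ℕ) : ∀ (n : ℕ) (rem : List ℕ) (p : ℕ), search n rem p = true →
    rem.Nodup → (∀ k ∈ rem, s k ∈ rem) → (∀ k ∈ rem, s k ≠ k) → (∀ k ∈ rem, s (s k) = k) →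
    leafOK (tget (p + (rem.map fun k => s k * 16 ^ k).sum)) = true := by
  intro n
  induction n with
  | zero => intro rem p h; simp [search] at h
  | succ n ih =>
    intro rem p h hnd hcl hfp hinv
    cases rem with
    | nil => simpa [search] using h
    | cons k rest =>
      simp only [search, List.all_eq_true] at h
      have hk : k ∉ rest := (List.nodup_cons.1 hnd).1
      have hnd' : rest.Nodup := (List.nodup_cons.1 hnd).2
      have hsk : s k ∈ rest := by
        have h1 := hcl k (by simp)
        have h2 := hfp k (by simp)
        rcases List.mem_cons.1 h1 with h1 | h1
        · exact absurd h1 h2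
        · exact h1
      have hssk : s (s k) = k := hinv k (by simp)
      have := ih (rest.erase (s k)) _ (h _ hsk) (hnd'.erase _) ?_ ?_ ?_
      · have hp : (rest.map fun k => s k * 16 ^ k).sum =
            s (s k) * 16 ^ (s k) + ((rest.erase (s k)).map fun k => s k * 16 ^ k).sum := by
          rw [((List.perm_cons_erase hsk).map _).sum_eq]; simp
        rw [List.map_cons, List.sum_cons, hp, hssk]
        rw [← add_assoc, ← add_assoc]
        rw [← add_assoc] at this
        exact this
      · intro x hx
        rw [hnd'.mem_erase_iff] at hx ⊢
        have hx' : x ∈ k :: rest := List.mem_cons_of_mem _ hx.2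
        have hxk : x ≠ k := fun e => hk (e ▸ hx.2)
        refine ⟨fun e => hxk ?_, ?_⟩
        · rw [← hinv x hx', e, hssk]
        · rcases List.mem_cons.1 (hcl x hx') with h1 | h1
          · exact absurd (by rw [← h1, hinv x hx']) hx.1
          · exact h1
      · intro x hx
        exact hfp x (List.mem_cons_of_mem _ (List.mem_of_mem_erase hx))
      · intro x hx
        exact hinv x (List.mem_cons_of_mem _ (List.mem_of_mem_erase hx))

/-- The permutation `u` of the twelve points. -/
def uF (j : Fin 12) : Fin 12 := ⟨rotN j 1, by unfold rotN; omega⟩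

/-- The involution of model `i`. -/
def msF (i : Fin 6) (j : Fin 12) : Fin 12 := Fin.ofNat 12 (tget (modS i) j)

theorem modPar_lt (i : Fin 6) : (modPar i).1 < 12 ∧ (modPar i).2 < 12 := by
  revert i; decide

theorem msF_val (i : Fin 6) (j : Fin 12) : (msF i j : ℕ) = tget (modS i) j := by
  revert i j; decide +kernel

theorem rotN_lt (y c : ℕ) (h : y < 12) : rotN y c < 12 := by unfold rotN; omega

theorem blk_lt (a b c d j : ℕ) (ha : a < 12) (hb : b < 12) (hc : c < 12) (hd : d < 12) :
    blk a b c d j < 12 := by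
  unfold blk
  apply rotN_lt
  simp only [cond_eq_ite]
  split_ifs <;> assumption

theorem rot_blk (a b c d : ℕ) (j : Fin 12) :
    rotN (blk a b c d j) 1 = blk a b c d (uF j) := by
  have h : ∀ y c, rotN (rotN y c) 1 = rotN y ((c + 1) % 3) := by
    intro y c; unfold rotN; omega
  fin_cases j <;> exact h _ _

theorem tget_sum (n j : ℕ) (f : ℕ → ℕ) (hf : ∀ k, f k < 16) (hj : j < n) :
    tget (∑ i ∈ Finset.range n, f i * 16 ^ i) j = f j := by
  unfold tget
  induction j generalizing n f with
  | zero =>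
    obtain ⟨m, rfl⟩ : ∃ m, n = m + 1 := ⟨n - 1, by omega⟩
    rw [Finset.sum_range_succ']
    have : ∑ k ∈ Finset.range m, f (k + 1) * 16 ^ (k + 1)
        = (∑ k ∈ Finset.range m, f (k + 1) * 16 ^ k) * 16 := by
      rw [Finset.sum_mul]; exact Finset.sum_congr rfl fun k _ => by ring
    rw [this]
    have := hf 0
    simp only [pow_zero, mul_one, Nat.div_one]
    omega
  | succ j ih =>
    obtain ⟨m, rfl⟩ : ∃ m, n = m + 1 := ⟨n - 1, by omega⟩
    rw [Finset.sum_range_succ']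
    have h1 : ∑ k ∈ Finset.range m, f (k + 1) * 16 ^ (k + 1)
        = (∑ k ∈ Finset.range m, f (k + 1) * 16 ^ k) * 16 := by
      rw [Finset.sum_mul]; exact Finset.sum_congr rfl fun k _ => by ring
    rw [h1, pow_succ', ← Nat.div_div_eq_div_mul]
    have h2 := hf 0
    have h3 : ((∑ k ∈ Finset.range m, f (k + 1) * 16 ^ k) * 16 + f 0 * 16 ^ 0) / 16
        = ∑ k ∈ Finset.range m, f (k + 1) * 16 ^ k := by
      simp only [pow_zero, mul_one]; omega
    rw [h3]
    exact ih m (fun k => f (k + 1)) (fun k => hf _) (by omega)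

theorem sum_aux (f : ℕ → ℕ) : ∑ i ∈ Finset.range 12, f i =
    f 0 + f 3 + (List.map f [1, 2, 4, 5, 6, 7, 8, 9, 10, 11]).sum := by
  simp only [List.map_cons, List.map_nil, List.sum_cons, List.sum_nil, Finset.sum_range_succ,
    Finset.sum_range_zero]
  ring

theorem exists_table (s : Fin 12 → Fin 12) (hinv : ∀ j, s (s j) = j) (hfp : ∀ j, s j ≠ j)
    (h0 : s 0 = 3) : ∃ P, leafOK (tget P) = true ∧ ∀ j : Fin 12, tget P j = s j := by
  have h3 : s 3 = 0 := by rw [← h0, hinv]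
  obtain ⟨sN, hsN, hb⟩ : ∃ sN : ℕ → ℕ, (∀ j : Fin 12, sN j = s j) ∧ ∀ k, sN k < 16 :=
    ⟨fun k => (s (Fin.ofNat 12 k)).1, fun j => by simp,
      fun k => lt_trans (s (Fin.ofNat 12 k)).2 (by norm_num)⟩
  have hrem : ∀ k, k ∈ [1, 2, 4, 5, 6, 7, 8, 9, 10, 11] ↔ ∃ j : Fin 12, j ≠ 0 ∧ j ≠ 3 ∧ j.1 = k := by
    intro k
    constructor
    · intro h
      simp only [List.mem_cons, List.not_mem_nil, or_false] at h
      refine ⟨⟨k, by omega⟩, ?_, ?_, rfl⟩ <;> simp [Fin.ext_iff] <;> omega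
    · rintro ⟨j, h1, h2, rfl⟩
      revert j; decide
  have key := search_sound sN 7 [1, 2, 4, 5, 6, 7, 8, 9, 10, 11] 3 search_true (by decide)
    (by
      intro k hk
      obtain ⟨j, h1, h2, rfl⟩ := (hrem k).1 hk
      refine (hrem _).2 ⟨s j, fun e => h2 ?_, fun e => h1 ?_, (hsN j).symm⟩
      · rw [← hinv j, e, h0]
      · rw [← hinv j, e, h3])
    (by
      intro k hk
      obtain ⟨j, h1, h2, rfl⟩ := (hrem k).1 hk
      rw [hsN]
      exact fun e => hfp j (Fin.ext e))
    (by
      intro k hk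
      obtain ⟨j, h1, h2, rfl⟩ := (hrem k).1 hk
      exact (congrArg sN (hsN j)).trans ((hsN (s j)).trans (congrArg _ (hinv j))))
  have e0 : sN 0 = 3 := by have := hsN 0; rw [h0] at this; exact this
  have e3 : sN 3 = 0 := by have := hsN 3; rw [h3] at this; exact this
  have hsum : 3 + (List.map (fun k => sN k * 16 ^ k) [1, 2, 4, 5, 6, 7, 8, 9, 10, 11]).sum
      = ∑ i ∈ Finset.range 12, sN i * 16 ^ i := by
    have h := sum_aux (fun k => sN k * 16 ^ k)
    rw [h, e0, e3, pow_zero, mul_one, zero_mul, add_zero]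
  rw [hsum] at key
  exact ⟨_, key, fun j => by rw [tget_sum 12 j sN hb j.2, hsN]⟩

theorem classify (s : Fin 12 → Fin 12) (hinv : ∀ j, s (s j) = j) (hfp : ∀ j, s j ≠ j)
    (h0 : s 0 = 3) (hconn : ∃ j : Fin 12, j.1 < 6 ∧ 6 ≤ (s j).1)
    (hcnt : mincard s 2 + mincard uF 3 + mincard (fun j => s (uF j)) 12 = 14) :
    ∃ i : Fin 6, ∃ φ : Fin 12 → Fin 12,
      (∀ j, s (φ j) = φ (msF i j)) ∧ ∀ j, uF (φ j) = φ (uF j) := by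
  obtain ⟨P, key, ht⟩ := exists_table s hinv hfp h0
  simp only [leafOK, Bool.or_eq_true] at key
  rcases key with (key | key) | key
  · exfalso
    obtain ⟨j, hj, hsj⟩ := hconn
    rw [allB_iff] at key
    have := key j hj
    rw [ht, Nat.blt_eq] at this
    omega
  · exfalso
    rw [cnt_mincard (tget P) s ht, cnt_mincard (rotN · 1) uF (fun j => rfl),
      cnt_mincard (fun k => tget P (rotN k 1)) (fun j => s (uF j)) (fun j => ht (uF j)), hcnt] at key
    simp at key
  · rw [anyB_iff] at key
    obtain ⟨i, hi, key⟩ := key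
    rw [anyB_iff] at key
    obtain ⟨r, hr, key⟩ := key
    rw [isoB, allB_iff] at key
    have htl : ∀ k < 12, tget P k < 12 := by
      intro k hk
      have := ht ⟨k, hk⟩
      simp only at this
      rw [this]; exact (s ⟨k, hk⟩).2
    have hlt : ∀ j, isoMap (tget P) i r j < 12 := by
      intro j
      have a1 : tget P r < 12 := htl r hr
      have a2 := htl _ (blk_lt r _ 0 0 (modPar i).1 hr a1 (by norm_num) (by norm_num))
      have a3 := htl _ (blk_lt r _ _ 0 (modPar i).2 hr a1 a2 (by norm_num))
      exact blk_lt _ _ _ _ _ hr a1 a2 a3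
    refine ⟨⟨i, hi⟩, fun j => ⟨isoMap (tget P) i r j, hlt j⟩, ?_, ?_⟩
    · intro j
      have := Nat.eq_of_beq_eq_true (key j j.2)
      apply Fin.ext
      rw [← ht]
      simp only [msF_val]
      exact this
    · intro j
      apply Fin.ext
      exact rot_blk _ _ _ _ j

/-! ### Basic facts on the modular group -/

theorem mem_pmOne (A : SL2Z) : A ∈ pmOne ↔ A = 1 ∨ A = -1 := by
  constructor
  · rintro ⟨n, rfl⟩
    rcases Int.even_or_odd n with h | h
    · left; exact h.neg_one_zpow
    · right; exact h.neg_one_zpow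
  · rintro (rfl | rfl)
    · exact one_mem _
    · exact Subgroup.mem_zpowers _

theorem xi_eq_one (A : SL2Z) : xi A = 1 ↔ A = 1 ∨ A = -1 := by
  rw [← mem_pmOne]; exact QuotientGroup.eq_one_iff A

theorem xi_surj : Function.Surjective xi := QuotientGroup.mk'_surjective pmOne

theorem xi_neg (A : SL2Z) : xi (-A) = xi A := by
  have h : xi (-1) = 1 := (xi_eq_one _).2 (Or.inr rfl)
  rw [← neg_one_mul, map_mul, h, one_mul]

theorem xi_eq_iff (A B : SL2Z) : xi A = xi B ↔ A = B ∨ A = -B := by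
  constructor
  · intro h
    have : xi (A * B⁻¹) = 1 := by rw [map_mul, map_inv, h, mul_inv_cancel]
    rcases (xi_eq_one _).1 this with h | h
    · left; exact mul_inv_eq_one.1 h
    · right; rw [mul_inv_eq_iff_eq_mul] at h; rw [h, neg_one_mul]
  · rintro (rfl | rfl)
    · rfl
    · exact xi_neg B

theorem Sp_eq : Sp = xi ModularGroup.S := rfl

theorem Tp_eq : Tp = xi ModularGroup.T := rfl

theorem Sp_sq : Sp * Sp = 1 := by
  rw [Sp_eq, ← map_mul, xi_eq_one]; right; decide

theorem Up_cube : (Sp * Tp) * ((Sp * Tp) * (Sp * Tp)) = 1 := by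
  rw [Sp_eq, Tp_eq, ← map_mul, ← map_mul, ← map_mul, xi_eq_one]
  decide

theorem Sp_ne : Sp ≠ 1 := by
  rw [Sp_eq, Ne, xi_eq_one]; decide

theorem Up_ne : Sp * Tp ≠ 1 := by
  rw [Sp_eq, Tp_eq, ← map_mul, Ne, xi_eq_one]; decide

theorem Tp_eq_mul : Tp = Sp * (Sp * Tp) := by rw [← mul_assoc, Sp_sq, one_mul]

theorem gen_closure : Subgroup.closure {Sp, Sp * Tp} = (⊤ : Subgroup PSL2Z) := by
  have h1 : Subgroup.closure {Sp, Tp} = (⊤ : Subgroup PSL2Z) := by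
    have h := congrArg (Subgroup.map xi) SpecialLinearGroup.SL2Z_generators
    rw [MonoidHom.map_closure, Set.image_pair, Subgroup.map_top_of_surjective _ xi_surj] at h
    exact h
  rw [eq_top_iff, ← h1, Subgroup.closure_le]
  have hs : Sp ∈ Subgroup.closure ({Sp, Sp * Tp} : Set PSL2Z) := Subgroup.subset_closure (by simp)
  have hu : Sp * Tp ∈ Subgroup.closure ({Sp, Sp * Tp} : Set PSL2Z) :=
    Subgroup.subset_closure (by simp)
  rintro x (rfl | rfl)
  · exact hs
  · have h := mul_mem hs hu
    rwa [← Tp_eq_mul] at h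

theorem gen_ind (P : PSL2Z → Prop) (hS : P Sp) (hU : P (Sp * Tp)) (h1 : P 1)
    (hmul : ∀ x y, P x → P y → P (x * y)) (hinv : ∀ x, P x → P x⁻¹) (g : PSL2Z) : P g := by
  have hg : g ∈ Subgroup.closure ({Sp, Sp * Tp} : Set PSL2Z) := by rw [gen_closure]; trivial
  induction hg using Subgroup.closure_induction with
  | mem x hx => rcases hx with rfl | rfl <;> assumption
  | one => exact h1
  | mul x y _ _ hx hy => exact hmul x y hx hy
  | inv x _ hx => exact hinv x hx

theorem closed_univ {Γ : Subgroup PSL2Z} (A : Set (PSL2Z ⧸ Γ)) (hne : A.Nonempty)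
    (hS : ∀ x ∈ A, Sp • x ∈ A) (hU : ∀ x ∈ A, (Sp * Tp) • x ∈ A) : A = Set.univ := by
  have h : ∀ g : PSL2Z, ∀ x, x ∈ A ↔ g • x ∈ A := by
    apply gen_ind
    · intro x
      refine ⟨hS x, fun h => ?_⟩
      have := hS _ h
      rwa [smul_smul, Sp_sq, one_smul] at this
    · intro x
      refine ⟨hU x, fun h => ?_⟩
      have := hU _ (hU _ h)
      rwa [smul_smul, smul_smul, mul_assoc, Up_cube, one_smul] at this
    · intro x; rw [one_smul]
    · intro a b ha hb x
      rw [mul_smul, ← ha, ← hb]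
    · intro a ha x
      rw [ha (a⁻¹ • x), smul_inv_smul]
  obtain ⟨x, hx⟩ := hne
  ext y
  simp only [Set.mem_univ, iff_true]
  obtain ⟨g, rfl⟩ := MulAction.exists_smul_eq PSL2Z x y
  exact (h g x).1 hx

theorem torsion_trace_aux (A : SL2Z) (ht : 2 ≤ A 0 0 + A 1 1) (n : ℕ) :
    ∃ x y : ℤ, 0 ≤ y ∧ y < x ∧ (A ^ (n + 1)) 0 1 = x * A 0 1 ∧ (A ^ (n + 1)) 1 0 = x * A 1 0 ∧
      (A ^ (n + 1)) 0 0 = x * A 0 0 - y ∧ (A ^ (n + 1)) 1 1 = x * A 1 1 - y := by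
  have hdet : A 0 0 * A 1 1 - A 0 1 * A 1 0 = 1 := by
    have := A.det_coe; rwa [Matrix.det_fin_two] at this
  induction n with
  | zero => exact ⟨1, 0, by simp⟩
  | succ n ih =>
    obtain ⟨x, y, hy, hxy, h1, h2, h3, h4⟩ := ih
    refine ⟨x * (A 0 0 + A 1 1) - y, x, by omega, by nlinarith, ?_, ?_, ?_, ?_⟩ <;>
      rw [pow_succ, Matrix.SpecialLinearGroup.coe_mul, Matrix.mul_apply, Fin.sum_univ_two] <;>
      simp only [h1, h2, h3, h4]
    · ring
    · ring
    · linear_combination (-x) * hdet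
    · linear_combination (-x) * hdet

theorem torsion_trace_pos (A : SL2Z) (hA : IsOfFinOrder (xi A)) (ht : 2 ≤ A 0 0 + A 1 1) :
    xi A = 1 := by
  obtain ⟨n, hn, h⟩ := isOfFinOrder_iff_pow_eq_one.1 hA
  obtain ⟨m, rfl⟩ : ∃ m, n = m + 1 := ⟨n - 1, by omega⟩
  obtain ⟨x, y, hy, hxy, h1, h2, h3, h4⟩ := torsion_trace_aux A ht m
  rw [← map_pow, xi_eq_one] at h
  have hdet : A 0 0 * A 1 1 - A 0 1 * A 1 0 = 1 := by
    have := A.det_coe; rwa [Matrix.det_fin_two] at this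
  have hx : x ≠ 0 := by omega
  have e1 : A 0 1 = 0 := by
    have : (A ^ (m + 1)) 0 1 = 0 := by rcases h with h | h <;> rw [h] <;> simp
    rw [this] at h1
    rcases mul_eq_zero.1 h1.symm with h | h
    · exact absurd h hx
    · exact h
  have e2 : A 1 0 = 0 := by
    have : (A ^ (m + 1)) 1 0 = 0 := by rcases h with h | h <;> rw [h] <;> simp
    rw [this] at h2
    rcases mul_eq_zero.1 h2.symm with h | h
    · exact absurd h hx
    · exact h
  rw [e1, zero_mul, sub_zero] at hdet
  have e3 : A 0 0 = 1 ∧ A 1 1 = 1 := by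
    rcases Int.mul_eq_one_iff_eq_one_or_neg_one.1 hdet with h | h <;> omega
  rw [xi_eq_one]
  left
  ext i j
  fin_cases i <;> fin_cases j <;> simp [e1, e2, e3.1, e3.2]

theorem torsion_trace (A : SL2Z) (hA : IsOfFinOrder (xi A)) (h1 : xi A ≠ 1) :
    -1 ≤ A 0 0 + A 1 1 ∧ A 0 0 + A 1 1 ≤ 1 := by
  constructor
  · by_contra h
    rw [← xi_neg] at hA h1
    refine h1 (torsion_trace_pos (-A) hA ?_)
    simp only [Matrix.SpecialLinearGroup.coe_neg, Matrix.neg_apply]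
    omega
  · by_contra h
    exact h1 (torsion_trace_pos A hA (by omega))

theorem fpf_of_tf {Γ : Subgroup PSL2Z} (hΓ : TorsionFree Γ) (g : PSL2Z) (hg : IsOfFinOrder g)
    (h1 : g ≠ 1) (x : PSL2Z ⧸ Γ) : g • x ≠ x := by
  induction x using QuotientGroup.induction_on with
  | H z =>
    intro h
    have h' : ((g * z : PSL2Z) : PSL2Z ⧸ Γ) = z := h
    have h2 := QuotientGroup.eq.1 h'.symm
    refine hΓ _ h2 ?_ ?_
    · intro e
      apply h1
      rw [inv_mul_eq_one] at e
      exact mul_eq_right.1 e.symm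
    · have e : z⁻¹ * (g * z) = MulAut.conj z⁻¹ g := by simp [mul_assoc]
      rw [e]
      exact (MulAut.conj z⁻¹).toMonoidHom.isOfFinOrder hg

theorem Sp_fin : IsOfFinOrder Sp :=
  isOfFinOrder_iff_pow_eq_one.2 ⟨2, by norm_num, by rw [pow_two, Sp_sq]⟩

theorem Up_pow : (Sp * Tp) ^ 3 = 1 := by rw [pow_succ', pow_two, Up_cube]

theorem Up_fin : IsOfFinOrder (Sp * Tp) :=
  isOfFinOrder_iff_pow_eq_one.2 ⟨3, by norm_num, Up_pow⟩

/-! ### Orbit counts -/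

theorem smul_pow_iter {Γ : Subgroup PSL2Z} {g : PSL2Z} {e : Fin 12 → PSL2Z ⧸ Γ}
    {σ : Fin 12 → Fin 12} (h : ∀ j, g • e j = e (σ j)) (n : ℕ) (j : Fin 12) :
    g ^ n • e j = e (σ^[n] j) := by
  induction n generalizing j with
  | zero => simp
  | succ n ih => rw [pow_succ, mul_smul, h, ih, Function.iterate_succ_apply]

theorem nOrb_eq {Γ : Subgroup PSL2Z} {g : PSL2Z} (e : Fin 12 ≃ PSL2Z ⧸ Γ)
    {σ : Fin 12 → Fin 12} (h : ∀ j, g • e j = e (σ j)) (m : ℕ)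
    (hm : ∀ (j : Fin 12) (z : ℤ), ∃ n < m, g ^ z • e j = e (σ^[n] j)) :
    nOrb g Γ = mincard σ m := by
  classical
  let B := {j : Fin 12 // ∀ n < m, j ≤ σ^[n] j}
  have hB : mincard σ m = Nat.card B := by
    rw [Nat.card_eq_fintype_card, Fintype.card_subtype]; rfl
  rw [hB, nOrb]
  symm
  let F : B → MulAction.orbitRel.Quotient (Subgroup.zpowers g) (PSL2Z ⧸ Γ) :=
    fun j => Quotient.mk'' (e j.1)
  have hrel : ∀ x y : Fin 12, (Quotient.mk'' (e x) :
      MulAction.orbitRel.Quotient (Subgroup.zpowers g) (PSL2Z ⧸ Γ)) = Quotient.mk'' (e y) ↔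
      ∃ n < m, x = σ^[n] y := by
    intro x y
    rw [Quotient.eq'', MulAction.orbitRel_apply, MulAction.mem_orbit_iff]
    constructor
    · rintro ⟨⟨_, z, rfl⟩, hz⟩
      obtain ⟨n, hn, hn'⟩ := hm y z
      have hz' : g ^ z • e y = e x := hz
      exact ⟨n, hn, e.injective (by rw [← hn', hz'])⟩
    · rintro ⟨n, hn, rfl⟩
      exact ⟨⟨g ^ n, n, by simp⟩, smul_pow_iter h n y⟩
  apply Nat.card_congr
  refine Equiv.ofBijective F ⟨?_, ?_⟩
  · rintro ⟨x, hx⟩ ⟨y, hy⟩ hxy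
    obtain ⟨n, hn, e1⟩ := (hrel x y).1 hxy
    obtain ⟨n', hn', e2⟩ := (hrel y x).1 hxy.symm
    apply Subtype.ext
    apply le_antisymm
    · exact (hx n' hn').trans_eq e2.symm
    · exact (hy n hn).trans_eq e1.symm
  · intro q
    induction q using Quotient.inductionOn' with
    | h x =>
      obtain ⟨k, rfl⟩ := e.surjective x
      let O : Finset (Fin 12) := Finset.univ.filter fun y => ∃ n < m, y = σ^[n] k
      have hk : k ∈ O := by
        simp only [O, Finset.mem_filter, Finset.mem_univ, true_and]
        exact (hrel k k).1 rfl
      obtain ⟨y, hy, hmin⟩ := O.exists_min_image id ⟨k, hk⟩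
      simp only [O, Finset.mem_filter, Finset.mem_univ, true_and, id] at hy hmin
      have hyk := (hrel y k).2 hy
      refine ⟨⟨y, fun n hn => hmin _ ?_⟩, hyk⟩
      rw [← hrel, ← hyk, hrel]
      exact ⟨n, hn, rfl⟩

theorem hm_of_pow {Γ : Subgroup PSL2Z} {g : PSL2Z} (e : Fin 12 ≃ PSL2Z ⧸ Γ)
    {σ : Fin 12 → Fin 12} (h : ∀ j, g • e j = e (σ j)) (m : ℕ) (hm : 0 < m) (hg : g ^ m = 1)
    (j : Fin 12) (z : ℤ) : ∃ n < m, g ^ z • e j = e (σ^[n] j) := by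
  have hm' : (0 : ℤ) < m := by exact_mod_cast hm
  have h1 : 0 ≤ z % m := Int.emod_nonneg _ hm'.ne'
  have h2 : z % m < m := Int.emod_lt_of_pos _ hm'
  refine ⟨(z % m).toNat, by omega, ?_⟩
  rw [← smul_pow_iter h]
  congr 1
  conv_lhs => rw [← Int.emod_add_mul_ediv z m, _root_.zpow_add, _root_.zpow_mul,
    _root_.zpow_natCast, hg, _root_.one_zpow, mul_one]
  rw [← _root_.zpow_natCast, Int.toNat_of_nonneg h1]

theorem hm_twelve {Γ : Subgroup PSL2Z} {g : PSL2Z} (e : Fin 12 ≃ PSL2Z ⧸ Γ)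
    {σ : Fin 12 → Fin 12} (h : ∀ j, g • e j = e (σ j))
    (j : Fin 12) (z : ℤ) : ∃ n < 12, g ^ z • e j = e (σ^[n] j) := by
  let π : Equiv.Perm (Fin 12) := (e.trans (MulAction.toPerm g)).trans e.symm
  have hπ : ∀ k, e (π k) = g • e k := by intro k; simp [π]
  have hπz : ∀ (z : ℤ) k, e ((π ^ z) k) = g ^ z • e k := by
    intro z k
    have : π ^ z = (e.trans (MulAction.toPerm (g ^ z))).trans e.symm := by
      let f : PSL2Z →* Equiv.Perm (Fin 12) :=
        (e.symm.permCongrHom.toMonoidHom).comp (MulAction.toPermHom PSL2Z (PSL2Z ⧸ Γ))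
      have hf : ∀ g' : PSL2Z, f g' = (e.trans (MulAction.toPerm g')).trans e.symm := fun g' => rfl
      have hp : π = f g := (hf g).symm
      rw [hp, ← map_zpow, hf]
    rw [this]; simp
  have hsc : π.SameCycle j ((π ^ z) j) := ⟨z, rfl⟩
  by_cases hj : π j = j
  · refine ⟨0, by norm_num, ?_⟩
    rw [← hπz, Equiv.Perm.zpow_apply_eq_self_of_apply_eq_self hj]; rfl
  · obtain ⟨i, hi, hi'⟩ := hsc.exists_pow_eq_of_mem_support (by simpa using hj)
    refine ⟨i, lt_of_lt_of_le hi ((Finset.card_le_univ _).trans (by simp)), ?_⟩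
    rw [← smul_pow_iter h, ← hπz, ← hi', ← _root_.zpow_natCast, hπz, _root_.zpow_natCast]

theorem genus_eq {Γ : Subgroup PSL2Z} (e : Fin 12 ≃ PSL2Z ⧸ Γ)
    {s : Fin 12 → Fin 12} (hs : ∀ j, Sp • e j = e (s j))
    (hu : ∀ j, (Sp * Tp) • e j = e (uF j)) :
    nOrb Sp Γ + nOrb (Sp * Tp) Γ + nOrb Tp Γ =
      mincard s 2 + mincard uF 3 + mincard (fun j => s (uF j)) 12 := by
  have ht : ∀ j, Tp • e j = e (s (uF j)) := by
    intro j; rw [Tp_eq_mul, mul_smul, hu, hs]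
  rw [nOrb_eq e hs 2 (hm_of_pow e hs 2 (by norm_num) (by rw [pow_two, Sp_sq])),
    nOrb_eq e hu 3 (hm_of_pow e hu 3 (by norm_num) Up_pow),
    nOrb_eq e ht 12 (hm_twelve e ht)]

/-! ### The six models as congruence subgroups -/

/-- Matrices with `M ∣ b`, `N ∣ c`, `a ≡ d ≡ 1 mod K`. -/
def cong (M N K : ℤ) (h : K ∣ M * N) : Subgroup SL2Z where
  carrier := {A | M ∣ A 0 1 ∧ N ∣ A 1 0 ∧ K ∣ A 0 0 - 1 ∧ K ∣ A 1 1 - 1}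
  one_mem' := by simp
  mul_mem' := by
    rintro A B ⟨a1, a2, a3, a4⟩ ⟨b1, b2, b3, b4⟩
    simp only [Set.mem_ofPred_eq, Matrix.SpecialLinearGroup.coe_mul, Matrix.mul_apply,
      Fin.sum_univ_two]
    refine ⟨dvd_add (b1.mul_left _) (a1.mul_right _), dvd_add (a2.mul_right _) (b2.mul_left _),
      ?_, ?_⟩
    · have h1 : K ∣ A 0 1 * B 1 0 := h.trans (mul_dvd_mul a1 b2)
      have h2 := dvd_add (dvd_add (a3.mul_right (B 0 0)) b3) h1
      have e : (A 0 0 - 1) * B 0 0 + (B 0 0 - 1) + A 0 1 * B 1 0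
        = A 0 0 * B 0 0 + A 0 1 * B 1 0 - 1 := by ring
      rwa [e] at h2
    · have h1 : K ∣ A 1 0 * B 0 1 := by
        have := h.trans (mul_dvd_mul b1 a2)
        rwa [mul_comm] at this
      have h2 := dvd_add (dvd_add (a4.mul_right (B 1 1)) b4) h1
      have e : (A 1 1 - 1) * B 1 1 + (B 1 1 - 1) + A 1 0 * B 0 1
        = A 1 0 * B 0 1 + A 1 1 * B 1 1 - 1 := by ring
      rwa [e] at h2
  inv_mem' := by
    rintro A ⟨a1, a2, a3, a4⟩
    rw [Set.mem_ofPred_eq, Matrix.SpecialLinearGroup.SL2_inv_expl]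
    simp only [Matrix.cons_val', Matrix.cons_val_zero, Matrix.cons_val_one,
      Matrix.cons_val_fin_one, dvd_neg]
    exact ⟨a1, a2, a4, a3⟩

/-- The parameters of the six models. -/
def prm : Fin 6 → ℤ × ℤ × ℤ :=
  ![(3, 3, 3), (2, 4, 4), (1, 5, 5), (1, 6, 6), (1, 8, 4), (1, 9, 3)]

theorem prm_dvd (i : Fin 6) : (prm i).2.2 ∣ (prm i).1 * (prm i).2.1 := by
  revert i; decide

/-- The six model subgroups. -/
def mdl (i : Fin 6) : Subgroup PSL2Z :=
  (cong (prm i).1 (prm i).2.1 (prm i).2.2 (prm_dvd i)).map xi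

/-- membership up to sign, on entries -/
def memq (i : Fin 6) (a b c d : ℤ) : Prop :=
  (prm i).1 ∣ b ∧ (prm i).2.1 ∣ c ∧
    (((prm i).2.2 ∣ a - 1 ∧ (prm i).2.2 ∣ d - 1) ∨ ((prm i).2.2 ∣ -a - 1 ∧ (prm i).2.2 ∣ -d - 1))

instance (i : Fin 6) (a b c d : ℤ) : Decidable (memq i a b c d) := by
  unfold memq; infer_instance

theorem mem_mdl (i : Fin 6) (A : SL2Z) :
    xi A ∈ mdl i ↔ memq i (A 0 0) (A 0 1) (A 1 0) (A 1 1) := by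
  constructor
  · rintro ⟨B, ⟨h1, h2, h3, h4⟩, hBA⟩
    rcases (xi_eq_iff B A).1 hBA with rfl | rfl
    · exact ⟨h1, h2, Or.inl ⟨h3, h4⟩⟩
    · simp only [Matrix.SpecialLinearGroup.coe_neg, Matrix.neg_apply, dvd_neg] at h1 h2 h3 h4
      exact ⟨h1, h2, Or.inr ⟨h3, h4⟩⟩
  · rintro ⟨h1, h2, ⟨h3, h4⟩ | ⟨h3, h4⟩⟩
    · exact ⟨A, ⟨h1, h2, h3, h4⟩, rfl⟩
    · refine ⟨-A, ?_, xi_neg A⟩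
      refine ⟨?_, ?_, ?_, ?_⟩ <;>
        simp only [Matrix.SpecialLinearGroup.coe_neg, Matrix.neg_apply, dvd_neg] <;> assumption

/-- Coset representatives: base points of the four triangles in each model. -/
def reps : List (List (ℤ × ℤ × ℤ × ℤ)) :=
  [
    [(1, 0, 0, 1), (0, -1, 1, 0), (-1, -1, 0, -1), (-1, 0, -1, -1)],
    [(1, 0, 0, 1), (0, -1, 1, 0), (-1, 0, -1, -1), (-1, 1, -1, 0)],
    [(1, 0, 1, 1), (-1, -1, 1, 0), (-2, -1, -1, -1), (2, 1, 3, 2)],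
    [(1, 0, 1, 1), (-1, -1, 1, 0), (-2, -1, -1, -1), (-1, 0, -2, -1)],
    [(1, 0, 1, 1), (-1, -1, 1, 0), (-2, -1, -1, -1), (3, 2, 1, 1)],
    [(1, 0, 1, 1), (-1, -1, 1, 0), (-2, -1, -1, -1), (-1, 0, -2, -1)]]

/-- left multiplication by `U` -/
def umul (q : ℤ × ℤ × ℤ × ℤ) : ℤ × ℤ × ℤ × ℤ :=
  (-q.2.2.1, -q.2.2.2, q.1 + q.2.2.1, q.2.1 + q.2.2.2)

/-- left multiplication by `S` -/
def smulq (q : ℤ × ℤ × ℤ × ℤ) : ℤ × ℤ × ℤ × ℤ :=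
  (-q.2.2.1, -q.2.2.2, q.1, q.2.1)

def quad (i : Fin 6) (j : Fin 12) : ℤ × ℤ × ℤ × ℤ :=
  umul^[j.1 % 3] (((reps.getD i []).getD (j.1 / 3) (1, 0, 0, 1)))

/-- same coset -/
def relq (i : Fin 6) (x y : ℤ × ℤ × ℤ × ℤ) : Prop :=
  memq i (x.2.2.2 * y.1 - x.2.1 * y.2.2.1) (x.2.2.2 * y.2.1 - x.2.1 * y.2.2.2)
    (-x.2.2.1 * y.1 + x.1 * y.2.2.1) (-x.2.2.1 * y.2.1 + x.1 * y.2.2.2)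

instance (i : Fin 6) (x y : ℤ × ℤ × ℤ × ℤ) : Decidable (relq i x y) := by
  unfold relq; infer_instance

theorem quad_det (i : Fin 6) (j : Fin 12) :
    (quad i j).1 * (quad i j).2.2.2 - (quad i j).2.1 * (quad i j).2.2.1 = 1 := by
  revert i j; decide +kernel

theorem quad_inj (i : Fin 6) (j k : Fin 12) (h : relq i (quad i j) (quad i k)) : j = k := by
  revert i j k; decide +kernel

theorem quad_S (i : Fin 6) (j : Fin 12) : relq i (smulq (quad i j)) (quad i (msF i j)) := by
  revert i j; decide +kernel

theorem quad_U (i : Fin 6) (j : Fin 12) : relq i (umul (quad i j)) (quad i (uF j)) := by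
  revert i j; decide +kernel

/-- matrix with given entries -/
def mat (q : ℤ × ℤ × ℤ × ℤ) (h : q.1 * q.2.2.2 - q.2.1 * q.2.2.1 = 1) : SL2Z :=
  ⟨!![q.1, q.2.1; q.2.2.1, q.2.2.2], by rw [Matrix.det_fin_two_of]; exact h⟩

theorem mul_entry (A B : SL2Z) (a b : Fin 2) : (A * B) a b = A a 0 * B 0 b + A a 1 * B 1 b := by
  rw [Matrix.SpecialLinearGroup.coe_mul, Matrix.mul_apply, Fin.sum_univ_two]

theorem inv_mat (x : ℤ × ℤ × ℤ × ℤ) (hx) :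
    (mat x hx)⁻¹ = mat (x.2.2.2, -x.2.1, -x.2.2.1, x.1) (by simp only; linarith) := by
  rw [inv_eq_iff_mul_eq_one]
  ext a b
  rw [mul_entry]
  fin_cases a <;> fin_cases b <;> simp [mat] <;> linarith

theorem mat_rel (i : Fin 6) (x y : ℤ × ℤ × ℤ × ℤ) (hx) (hy) :
    ((xi (mat x hx) : PSL2Z) : PSL2Z ⧸ mdl i) = (xi (mat y hy) : PSL2Z) ↔ relq i x y := by
  rw [QuotientGroup.eq, ← map_inv, ← map_mul, mem_mdl, relq]
  rw [inv_mat, mul_entry, mul_entry, mul_entry, mul_entry]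
  simp [mat, sub_eq_add_neg]

theorem smulq_det (q : ℤ × ℤ × ℤ × ℤ) (h : q.1 * q.2.2.2 - q.2.1 * q.2.2.1 = 1) :
    (smulq q).1 * (smulq q).2.2.2 - (smulq q).2.1 * (smulq q).2.2.1 = 1 := by
  simp only [smulq]; linarith

theorem umul_det (q : ℤ × ℤ × ℤ × ℤ) (h : q.1 * q.2.2.2 - q.2.1 * q.2.2.1 = 1) :
    (umul q).1 * (umul q).2.2.2 - (umul q).2.1 * (umul q).2.2.1 = 1 := by
  simp only [umul]; linarith

theorem Sp_mat (q : ℤ × ℤ × ℤ × ℤ) (h) : Sp * xi (mat q h) = xi (mat (smulq q) (smulq_det q h)) := by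
  rw [Sp_eq, ← map_mul]
  congr 1
  ext a b
  rw [mul_entry]
  fin_cases a <;> fin_cases b <;>
    simp [mat, smulq, ModularGroup.S]

theorem Up_mat (q : ℤ × ℤ × ℤ × ℤ) (h) :
    Sp * Tp * xi (mat q h) = xi (mat (umul q) (umul_det q h)) := by
  rw [Sp_eq, Tp_eq, ← map_mul, ← map_mul]
  congr 1
  ext a b
  rw [mul_entry, mul_entry, mul_entry]
  fin_cases a <;> fin_cases b <;>
    simp [mat, umul, ModularGroup.S, ModularGroup.T]

/-- the coset labelling of the models -/
def lab (i : Fin 6) (j : Fin 12) : PSL2Z ⧸ mdl i := (xi (mat (quad i j) (quad_det i j)) : PSL2Z)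

theorem lab_S (i : Fin 6) (j : Fin 12) : Sp • lab i j = lab i (msF i j) := by
  have : Sp • lab i j = ((Sp * xi (mat (quad i j) (quad_det i j)) : PSL2Z) : PSL2Z ⧸ mdl i) := rfl
  rw [this, Sp_mat]
  exact (mat_rel _ _ _ _ _).2 (quad_S i j)

theorem lab_U (i : Fin 6) (j : Fin 12) : (Sp * Tp) • lab i j = lab i (uF j) := by
  have : (Sp * Tp) • lab i j =
    ((Sp * Tp * xi (mat (quad i j) (quad_det i j)) : PSL2Z) : PSL2Z ⧸ mdl i) := rfl
  rw [this, Up_mat]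
  exact (mat_rel _ _ _ _ _).2 (quad_U i j)

theorem lab_bij (i : Fin 6) : Function.Bijective (lab i) := by
  constructor
  · intro j k h
    exact quad_inj i j k ((mat_rel _ _ _ _ _).1 h)
  · rw [← Set.range_eq_univ]
    apply closed_univ (Set.range (lab i)) (Set.range_nonempty _)
    · rintro _ ⟨j, rfl⟩; exact ⟨_, (lab_S i j).symm⟩
    · rintro _ ⟨j, rfl⟩; exact ⟨_, (lab_U i j).symm⟩

noncomputable def labE (i : Fin 6) : Fin 12 ≃ PSL2Z ⧸ mdl i := Equiv.ofBijective _ (lab_bij i)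

theorem labE_S (i : Fin 6) (j : Fin 12) : Sp • labE i j = labE i (msF i j) := lab_S i j

theorem labE_U (i : Fin 6) (j : Fin 12) : (Sp * Tp) • labE i j = labE i (uF j) := lab_U i j

theorem labE_T (i : Fin 6) (j : Fin 12) : Tp • labE i j = labE i (msF i (uF j)) := by
  rw [Tp_eq_mul, mul_smul, labE_U, labE_S]

theorem mdl_index (i : Fin 6) : (mdl i).index = 12 := by
  rw [Subgroup.index, ← Nat.card_congr (labE i)]; simp

theorem mdl_genus (i : Fin 6) : GenusZero (mdl i) := by
  rw [GenusZero, genus_eq (labE i) (labE_S i) (labE_U i), mdl_index]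
  revert i; decide +kernel

theorem mdl_tf (i : Fin 6) : TorsionFree (mdl i) := by
  rintro _ ⟨A, ⟨h1, h2, h3, h4⟩, rfl⟩ hne hfin
  have htr := torsion_trace A hfin hne
  have hdet : A 0 0 * A 1 1 - A 0 1 * A 1 0 = 1 := by
    have := A.det_coe; rwa [Matrix.det_fin_two] at this
  have key3 : (9 : ℤ) ∣ A 0 1 * A 1 0 → (3 : ℤ) ∣ A 0 0 - 1 → (3 : ℤ) ∣ A 1 1 - 1 → False := by
    rintro ⟨z, hz⟩ ⟨x, hx⟩ ⟨w, hw⟩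
    have e1 : A 0 0 = 1 + 3 * x := by omega
    have e2 : A 1 1 = 1 + 3 * w := by omega
    rw [hz, e1, e2] at hdet
    rw [e1, e2] at htr
    have : x + w = 3 * (z - x * w) := by linarith
    omega
  fin_cases i <;> simp [prm] at h1 h2 h3 h4
  · exact key3 (mul_dvd_mul h1 h2) h3 h4
  · omega
  · omega
  · omega
  · omega
  · exact key3 (h2.mul_left _) h3 h4

/-! ### Invariants -/

theorem nFix_conj (g : PSL2Z) {A B : Subgroup PSL2Z} (h : SubgroupConj A B) :
    nFix g A = nFix g B := by
  obtain ⟨k, rfl⟩ := h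
  let f : PSL2Z ⧸ A ≃ PSL2Z ⧸ (A.map (MulAut.conj k).toMonoidHom) :=
    Quotient.congr (Equiv.mulRight k⁻¹) (by
      intro a b
      change QuotientGroup.leftRel _ a b ↔ QuotientGroup.leftRel _ (a * k⁻¹) (b * k⁻¹)
      rw [QuotientGroup.leftRel_apply, QuotientGroup.leftRel_apply]
      have e : (a * k⁻¹)⁻¹ * (b * k⁻¹) = (MulAut.conj k).toMonoidHom (a⁻¹ * b) := by
        simp [mul_assoc]
      rw [e]
      exact (Subgroup.mem_map_iff_mem (MulAut.conj k).injective).symm)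
  have hf : ∀ x, f (g • x) = g • f x := by
    intro x
    induction x using QuotientGroup.induction_on with
    | H z =>
      change QuotientGroup.mk (g * z * k⁻¹) = QuotientGroup.mk (g * (z * k⁻¹))
      rw [mul_assoc]
  refine Nat.card_congr (f.subtypeEquiv fun x => ?_)
  rw [← hf, f.apply_eq_iff_eq]

theorem nFix_mdl (i : Fin 6) (g : PSL2Z) (σ : Fin 12 → Fin 12)
    (h : ∀ j, g • labE i j = labE i (σ j)) :
    nFix g (mdl i) = (Finset.univ.filter fun j => σ j = j).card := by
  classical
  rw [nFix, ← Fintype.card_subtype, ← Nat.card_eq_fintype_card]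
  refine Nat.card_congr ((labE i).subtypeEquiv fun j => ?_).symm
  rw [h, (labE i).apply_eq_iff_eq]

theorem mdl_inj (i k : Fin 6) (h1 : nFix Tp (mdl i) = nFix Tp (mdl k))
    (h2 : nFix (Tp * Tp) (mdl i) = nFix (Tp * Tp) (mdl k)) : i = k := by
  have hT2 : ∀ i j, (Tp * Tp) • labE i j = labE i (msF i (uF (msF i (uF j)))) := by
    intro i j; rw [mul_smul, labE_T, labE_T]
  rw [nFix_mdl i Tp _ (labE_T i), nFix_mdl k Tp _ (labE_T k)] at h1
  rw [nFix_mdl i _ _ (hT2 i), nFix_mdl k _ _ (hT2 k)] at h2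
  revert i k
  decide +kernel

/-! ### Classification -/

theorem conj_of_map {Γ Δ : Subgroup PSL2Z} (h12 : Γ.index = 12) (h12' : Δ.index = 12)
    (ψ : PSL2Z ⧸ Δ → PSL2Z ⧸ Γ) (hS : ∀ x, ψ (Sp • x) = Sp • ψ x)
    (hU : ∀ x, ψ ((Sp * Tp) • x) = (Sp * Tp) • ψ x) : SubgroupConj Δ Γ := by
  have h : ∀ g : PSL2Z, ∀ x, ψ (g • x) = g • ψ x := by
    refine gen_ind (fun g => ∀ x, ψ (g • x) = g • ψ x) hS hU ?_ ?_ ?_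
    · intro x; rw [one_smul, one_smul]
    · intro a b ha hb x
      rw [mul_smul, ha, hb, mul_smul]
    · intro a ha x
      rw [← smul_left_cancel_iff a, ← ha, smul_inv_smul, smul_inv_smul]
  obtain ⟨g, hg⟩ := QuotientGroup.mk_surjective (ψ ((1 : PSL2Z) : PSL2Z ⧸ Δ))
  refine ⟨g⁻¹, ?_⟩
  have hle : Subgroup.map (MulAut.conj g⁻¹).toMonoidHom Δ ≤ Γ := by
    rintro _ ⟨x, hx, rfl⟩
    have h1 := h x ((1 : PSL2Z) : PSL2Z ⧸ Δ)
    have h2 : x • ((1 : PSL2Z) : PSL2Z ⧸ Δ) = ((1 : PSL2Z) : PSL2Z ⧸ Δ) := by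
      change ((x * 1 : PSL2Z) : PSL2Z ⧸ Δ) = _
      rw [mul_one, eq_comm, QuotientGroup.eq]
      simpa using hx
    rw [h2, ← hg] at h1
    have h3 : (g : PSL2Z ⧸ Γ) = ((x * g : PSL2Z) : PSL2Z ⧸ Γ) := h1
    rw [QuotientGroup.eq] at h3
    simpa [mul_assoc] using h3
  have hidx : (Subgroup.map (MulAut.conj g⁻¹).toMonoidHom Δ).index = 12 := by
    rw [← h12']
    exact Subgroup.index_map_equiv Δ (MulAut.conj g⁻¹)
  refine le_antisymm hle ?_
  have h4 := Subgroup.relIndex_mul_index hle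
  rw [hidx, h12] at h4
  exact Subgroup.relIndex_eq_one.1 (by omega)

theorem labelling {X : Type*} [Fintype X] (hc : Fintype.card X = 12) (S U : X → X)
    (hU : ∀ x, U (U (U x)) = x) (hUf : ∀ x, U x ≠ x)
    (htr : ∀ A : Set X, A.Nonempty → (∀ x ∈ A, S x ∈ A) → (∀ x ∈ A, U x ∈ A) → A = Set.univ) :
    ∃ e : Fin 12 ≃ X, (∀ j, U (e j) = e (uF j)) ∧ S (e 0) = e 3 := by
  classical
  let O : X → Finset X := fun y => {y, U y, U (U y)}
  have hO : ∀ x y, x ∈ O y ↔ x = y ∨ x = U y ∨ x = U (U y) := by intro x y; simp [O]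
  have hOc : ∀ y, (O y).card ≤ 3 := fun y => Finset.card_le_three
  have hsymm : ∀ x y, x ∈ O y → y ∈ O x := by
    intro x y h
    rw [hO] at h ⊢
    rcases h with rfl | rfl | rfl
    · exact Or.inl rfl
    · right; right; rw [hU]
    · right; left; rw [hU]
  have htrans : ∀ x y z, x ∈ O y → y ∈ O z → x ∈ O z := by
    intro x y z h h'
    rw [hO] at h h' ⊢
    rcases h with rfl | rfl | rfl <;> rcases h' with rfl | rfl | rfl <;> simp [hU]
  have hself : ∀ x, x ∈ O x := fun x => by simp [O]
  have hOU : ∀ x, U x ∈ O x := fun x => by simp [O]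
  obtain ⟨y0, hy0⟩ : ∃ y, S y ∉ O y := by
    by_contra hcon
    push Not at hcon
    have hne : Nonempty X := Fintype.card_pos_iff.1 (by omega)
    obtain ⟨x⟩ := hne
    have h := htr (O x : Set X) ⟨x, hself x⟩ (fun z hz => htrans _ _ _ (hcon z) hz)
      (fun z hz => htrans _ _ _ (hOU z) hz)
    rw [Finset.coe_eq_univ] at h
    have h3 := hOc x
    rw [h, Finset.card_univ] at h3
    omega
  obtain ⟨y2, hy2⟩ : ∃ y, y ∉ O y0 ∪ O (S y0) := by
    by_contra hcon
    push Not at hcon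
    have h1 := Finset.card_union_le (O y0) (O (S y0))
    rw [Finset.eq_univ_iff_forall.2 hcon, Finset.card_univ] at h1
    have := hOc y0
    have := hOc (S y0)
    omega
  obtain ⟨y3, hy3⟩ : ∃ y, y ∉ O y0 ∪ O (S y0) ∪ O y2 := by
    by_contra hcon
    push Not at hcon
    have h1 := Finset.card_union_le (O y0) (O (S y0))
    have h2 := Finset.card_union_le (O y0 ∪ O (S y0)) (O y2)
    rw [Finset.eq_univ_iff_forall.2 hcon, Finset.card_univ] at h2
    have := hOc y0
    have := hOc (S y0)
    have := hOc y2
    omega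
  simp only [Finset.mem_union, not_or] at hy2 hy3
  let y : Fin 4 → X := ![y0, S y0, y2, y3]
  have hlt : ∀ a b : Fin 4, a < b → y b ∉ O (y a) := by
    intro a b hab
    fin_cases a <;> fin_cases b <;> first | (exfalso; revert hab; decide) | skip
    · exact hy0
    · exact hy2.1
    · exact hy3.1.1
    · exact hy2.2
    · exact hy3.1.2
    · exact hy3.2
  have hblock : ∀ a b : Fin 4, y a ∈ O (y b) → a = b := by
    intro a b h
    rcases lt_trichotomy a b with hab | hab | hab
    · exact absurd (hsymm _ _ h) (hlt a b hab)
    · exact hab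
    · exact absurd h (hlt b a hab)
  let f : Fin 12 → X := fun k => U^[k.1 % 3] (y ⟨k.1 / 3, by omega⟩)
  have hfO : ∀ k : Fin 12, f k ∈ O (y ⟨k.1 / 3, by omega⟩) := by
    intro k
    have h3 : k.1 % 3 < 3 := Nat.mod_lt _ (by norm_num)
    simp only [f, hO]
    generalize k.1 % 3 = r at h3
    interval_cases r <;> simp
  have hres : ∀ (r t : ℕ) (x : X), r < 3 → t < 3 → U^[r] x = U^[t] x → r = t := by
    intro r t x hr ht h
    have a1 := hUf x
    have a2 := hUf (U x)
    have a3 := hUf (U (U x))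
    rw [hU] at a3
    interval_cases r <;> interval_cases t <;> simp at h <;> first | rfl | (exfalso; grind)
  have hinj : Function.Injective f := by
    intro k l hkl
    have h1 := hfO k
    have h2 := hfO l
    rw [← hkl] at h2
    have h3 := hblock _ _ (htrans _ _ _ (hsymm _ _ h1) h2)
    have h4 : k.1 / 3 = l.1 / 3 := congrArg Fin.val h3
    have h5 : U^[k.1 % 3] (y ⟨k.1 / 3, by omega⟩) = U^[l.1 % 3] (y ⟨k.1 / 3, by omega⟩) := by
      have h6 : U^[k.1 % 3] (y ⟨k.1 / 3, by omega⟩) = U^[l.1 % 3] (y ⟨l.1 / 3, by omega⟩) := hkl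
      rw [h6]; congr 2; exact h3.symm
    have h6 := hres _ _ _ (Nat.mod_lt _ (by norm_num)) (Nat.mod_lt _ (by norm_num)) h5
    apply Fin.ext
    omega
  have hbij : Function.Bijective f :=
    (Fintype.bijective_iff_injective_and_card f).2 ⟨hinj, by simp [hc]⟩
  refine ⟨Equiv.ofBijective f hbij, ?_, rfl⟩
  intro j
  change U (f j) = f (uF j)
  fin_cases j <;> first | rfl | exact hU _

theorem classify_group (Γ : Subgroup PSL2Z) (hidx : Γ.index = 12) (hg : GenusZero Γ)
    (htf : TorsionFree Γ) : ∃ i, SubgroupConj (mdl i) Γ := by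
  have hcard : Nat.card (PSL2Z ⧸ Γ) = 12 := hidx
  have hfin : Finite (PSL2Z ⧸ Γ) := Nat.finite_of_card_ne_zero (by rw [hcard]; norm_num)
  have : Fintype (PSL2Z ⧸ Γ) := Fintype.ofFinite _
  rw [Nat.card_eq_fintype_card] at hcard
  obtain ⟨e, heU, he0⟩ := labelling hcard (fun x => Sp • x) (fun x => (Sp * Tp) • x)
    (fun x => by simp only [smul_smul]; rw [Up_cube, one_smul])
    (fpf_of_tf htf _ Up_fin Up_ne) (fun A h1 h2 h3 => closed_univ A h1 h2 h3)
  obtain ⟨s, hs⟩ : ∃ s : Fin 12 → Fin 12, ∀ j, Sp • e j = e (s j) :=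
    ⟨fun j => e.symm (Sp • e j), fun j => by simp⟩
  have hgen := genus_eq e hs heU
  rw [hg, hidx] at hgen
  obtain ⟨i, φ, hφ, hφu⟩ := classify s
    (fun j => by
      apply e.injective
      rw [← hs, ← hs, smul_smul, Sp_sq, one_smul])
    (fun j hj => fpf_of_tf htf _ Sp_fin Sp_ne (e j) (by rw [hs, hj]))
    (by
      apply e.injective
      rw [← hs]; exact he0)
    (by
      by_contra hcon
      push Not at hcon
      have h := closed_univ (e '' {j | j.1 < 6}) ⟨e 0, 0, by simp, rfl⟩
        (by
          rintro _ ⟨j, hj, rfl⟩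
          exact ⟨s j, hcon j hj, (hs j).symm⟩)
        (by
          rintro _ ⟨j, hj, rfl⟩
          refine ⟨uF j, ?_, (heU j).symm⟩
          simp only [Set.mem_ofPred_eq, uF, rotN] at hj ⊢
          omega)
      have h6 : e 6 ∈ e '' {j | j.1 < 6} := by rw [h]; trivial
      obtain ⟨j, hj, hj6⟩ := h6
      have := e.injective hj6
      subst this
      revert hj; decide)
    (by omega)
  refine ⟨i, conj_of_map hidx (mdl_index i) (fun x => e (φ ((labE i).symm x))) ?_ ?_⟩
  · intro x
    obtain ⟨j, rfl⟩ := (labE i).surjective x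
    simp only [labE_S, Equiv.symm_apply_apply]
    rw [hs, hφ]
  · intro x
    obtain ⟨j, rfl⟩ := (labE i).surjective x
    simp only [labE_U, Equiv.symm_apply_apply]
    exact (congrArg e (hφu j)).symm.trans (heU (φ j)).symm

/-- There are exactly 6 conjugacy classes of torsion-free genus-zero subgroups of
`PSL(2,ℤ)` of index 12. -/
theorem count_tf_index_twelve :
    countClasses (fun Γ => Γ.index = 12 ∧ GenusZero Γ ∧ TorsionFree Γ) = 6 := by
  let P : Subgroup PSL2Z → Prop := fun Γ => Γ.index = 12 ∧ GenusZero Γ ∧ TorsionFree Γ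
  let R : {Γ // P Γ} → {Γ // P Γ} → Prop := fun A B => SubgroupConj A.1 B.1
  let F : Fin 6 → Quot R := fun i => Quot.mk R ⟨mdl i, mdl_index i, mdl_genus i, mdl_tf i⟩
  have hF : Function.Bijective F := by
    constructor
    · intro i k h
      apply mdl_inj
      · exact congrArg (Quot.lift (fun A : {Γ // P Γ} => nFix Tp A.1)
          fun A B hAB => nFix_conj Tp hAB) h
      · exact congrArg (Quot.lift (fun A : {Γ // P Γ} => nFix (Tp * Tp) A.1)
          fun A B hAB => nFix_conj (Tp * Tp) hAB) h
    · intro q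
      induction q using Quot.inductionOn with
      | h A =>
        obtain ⟨Γ, h1, h2, h3⟩ := A
        obtain ⟨i, hi⟩ := classify_group Γ h1 h2 h3
        exact ⟨i, Quot.sound hi⟩
  have h := Nat.card_congr (Equiv.ofBijective F hF)
  rw [Nat.card_eq_fintype_card, Fintype.card_fin] at h
  exact h.symm
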